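/- arXiv:2603.09543 — 3 statements merged into one kernel-verified Lean document; each statement's English description precedes it below -/
import Mathlib

section
/- Let E be a real vector space with an ℝ-bilinear bracket [·,·], and let I, J be linear endomorphisms of E with I² = J² = −Id and IJ = −JI. Then for all A,B ∈ E: N(I,J)(A,B) = (1/2)[−N_{IJ}(JA,IB) + IJ·(N_I(A,B) − N_J(A,B))]. -/
/-- The Nijenhuis concomitant `N(I,J)` of two endomorphisms with respect to an
ℝ-bilinear bracket `br`. -/
noncomputable def Nij {E : Type*} [AddCommGroup E] [Module ℝ E]
    (br : E →ₗ[ℝ] E →ₗ[ℝ] E) (I J : Module.End ℝ E) (A B : E) : E :=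
  (1 / 2 : ℝ) • (br (I A) (J B) + br (J A) (I B)
    - I (br A (J B)) - I (br (J A) B)
    - J (br A (I B)) - J (br (I A) B)
    + I (J (br A B)) + J (I (br A B)))

/-!
Twice `N(I,J)` is the polar form of the Nijenhuis torsion `T_K`, which is quadratic in `K`.
When `I` and `J` anticommute and square to scalars, `K = IJ` sends `JA` and `IB` to multiples of
`IA` and `JB`, so up to scalars `T_K(JA,IB)` consists of `[IA,JB] + [JA,IB]`, `K[IA,IB]` and
`K[JA,JB]`. The last two are the leading terms of `K T_I(A,B)` and `K T_J(A,B)`, whose remaining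
terms are those of `N(I,J)(A,B)`, except for multiples of `K[A,B]` that cancel.
-/

section General

variable {R M : Type*} [CommRing R] [AddCommGroup M] [Module R M]

/-- The Nijenhuis torsion `T_K(A,B) = [KA,KB] - K[KA,B] - K[A,KB] + K²[A,B]` of an endomorphism
`K` with respect to a bilinear bracket, with no condition on `K²`. It is quadratic in `K`, and its
polar form stands for `2N(I,J)`, so that no division by two is needed over `R`. -/
def nijenhuisTorsion (br : M →ₗ[R] M →ₗ[R] M) (K : Module.End R M) (A B : M) : M :=
  br (K A) (K B) - K (br (K A) B) - K (br A (K B)) + K (K (br A B))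

theorem polar_nijenhuisTorsion (br : M →ₗ[R] M →ₗ[R] M) (I J : Module.End R M) (A B : M) :
    QuadraticMap.polar (nijenhuisTorsion br · A B) I J =
      br (I A) (J B) + br (J A) (I B)
        - I (br A (J B)) - I (br (J A) B) - J (br A (I B)) - J (br (I A) B)
        + I (J (br A B)) + J (I (br A B)) := by
  simp only [QuadraticMap.polar, nijenhuisTorsion, LinearMap.add_apply, map_add]
  abel

theorem apply_apply_of_mul_self_eq_smul_one {K : Module.End R M} {c : R}
    (hK : K * K = c • 1) (x : M) : K (K x) = c • x :=
  LinearMap.congr_fun hK x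

theorem apply_apply_of_mul_eq_neg_mul {I J : Module.End R M} (hIJ : I * J = -(J * I)) (x : M) :
    I (J x) = -J (I x) :=
  LinearMap.congr_fun hIJ x

theorem polar_nijenhuisTorsion_of_mul_eq_neg_mul (br : M →ₗ[R] M →ₗ[R] M)
    {I J : Module.End R M} (hIJ : I * J = -(J * I)) (A B : M) :
    QuadraticMap.polar (nijenhuisTorsion br · A B) I J =
      br (I A) (J B) + br (J A) (I B)
        - I (br (J A) B + br A (J B)) - J (br (I A) B + br A (I B)) := by
  rw [polar_nijenhuisTorsion, apply_apply_of_mul_eq_neg_mul hIJ, map_add, map_add]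
  abel

theorem apply_nijenhuisTorsion_of_mul_self_eq_smul_one (br : M →ₗ[R] M →ₗ[R] M)
    {K : Module.End R M} {c : R} (hK : K * K = c • 1) (A B : M) :
    K (nijenhuisTorsion br K A B) =
      K (br (K A) (K B)) - c • (br (K A) B + br A (K B)) + c • K (br A B) := by
  simp only [nijenhuisTorsion, map_add, map_sub, map_smul,
    apply_apply_of_mul_self_eq_smul_one hK]
  module

theorem nijenhuisTorsion_mul_of_mul_eq_neg_mul (br : M →ₗ[R] M →ₗ[R] M)
    {I J : Module.End R M} {a b : R} (hI : I * I = a • 1) (hJ : J * J = b • 1)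
    (hIJ : I * J = -(J * I)) (A B : M) :
    nijenhuisTorsion br (I * J) (J A) (I B) =
      a • I (J (br (J A) (J B))) - b • I (J (br (I A) (I B)))
        - (a * b) • (br (I A) (J B) + br (J A) (I B)) := by
  have mul_apply_J (x : M) : (I * J) (J x) = b • I x := by
    rw [Module.End.mul_apply, apply_apply_of_mul_self_eq_smul_one hJ, map_smul]
  have mul_apply_I (x : M) : (I * J) (I x) = -(a • J x) := by
    rw [Module.End.mul_apply, apply_apply_of_mul_eq_neg_mul hIJ,
      apply_apply_of_mul_self_eq_smul_one hI, map_smul]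
  have mul_apply_mul_apply (x : M) : (I * J) ((I * J) x) = -((a * b) • x) := by
    rw [Module.End.mul_apply I J x, mul_apply_I, apply_apply_of_mul_self_eq_smul_one hJ, mul_smul]
  rw [nijenhuisTorsion, mul_apply_mul_apply, mul_apply_J, mul_apply_I]
  simp only [map_smul, map_neg, LinearMap.smul_apply, Module.End.mul_apply]
  module

theorem mixed_nijenhuis_expression_general (br : M →ₗ[R] M →ₗ[R] M)
    {I J : Module.End R M} {a b : R} (hI : I * I = a • 1) (hJ : J * J = b • 1)
    (hIJ : I * J = -(J * I)) (A B : M) :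
    (a * b) • QuadraticMap.polar (nijenhuisTorsion br · A B) I J =
      -nijenhuisTorsion br (I * J) (J A) (I B)
        - b • I (J (nijenhuisTorsion br I A B)) + a • I (J (nijenhuisTorsion br J A B)) := by
  have torsion_I : I (J (nijenhuisTorsion br I A B)) =
      I (J (br (I A) (I B))) + a • J (br (I A) B + br A (I B)) + a • I (J (br A B)) := by
    rw [apply_apply_of_mul_eq_neg_mul hIJ, apply_nijenhuisTorsion_of_mul_self_eq_smul_one br hI,
      apply_apply_of_mul_eq_neg_mul hIJ, apply_apply_of_mul_eq_neg_mul hIJ]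
    simp only [map_add, map_sub, map_smul]
    module
  have torsion_J : I (J (nijenhuisTorsion br J A B)) =
      I (J (br (J A) (J B))) - b • I (br (J A) B + br A (J B)) + b • I (J (br A B)) := by
    rw [apply_nijenhuisTorsion_of_mul_self_eq_smul_one br hJ]
    simp only [map_add, map_sub, map_smul]
  rw [polar_nijenhuisTorsion_of_mul_eq_neg_mul br hIJ,
    nijenhuisTorsion_mul_of_mul_eq_neg_mul br hI hJ hIJ, torsion_I, torsion_J]
  module

end General

section Real

variable {E : Type*} [AddCommGroup E] [Module ℝ E] (br : E →ₗ[ℝ] E →ₗ[ℝ] E)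

theorem nij_eq_half_smul_polar (I J : Module.End ℝ E) (A B : E) :
    Nij br I J A B = (1 / 2 : ℝ) • QuadraticMap.polar (nijenhuisTorsion br · A B) I J := by
  rw [Nij, polar_nijenhuisTorsion]

theorem nij_self (K : Module.End ℝ E) (A B : E) :
    Nij br K K A B = nijenhuisTorsion br K A B := by
  rw [Nij, nijenhuisTorsion]
  module

end Real

/-- mixed Nijenhuis expression for two anticommuting generalized
almost complex structures. -/
theorem mixed_nijenhuis_expression
    {E : Type*} [AddCommGroup E] [Module ℝ E]
    (br : E →ₗ[ℝ] E →ₗ[ℝ] E)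
    (I J : Module.End ℝ E)
    (hI : I * I = -1) (hJ : J * J = -1) (hIJ : I * J = -(J * I)) :
    ∀ A B : E, Nij br I J A B =
      (1 / 2 : ℝ) • (-(Nij br (I * J) (I * J) (J A) (I B))
        + I (J (Nij br I I A B - Nij br J J A B))) := by
  intro A B
  simp only [nij_eq_half_smul_polar br I J, nij_self, map_sub]
  linear_combination (norm := module) (1 / 2 : ℝ) •
    mixed_nijenhuis_expression_general br (a := -1) (b := -1) (by simpa) (by simpa) hIJ A B
end

section
/- Let (I₁,I₂,I₃) be a rank-3 Clifford triple on a real vector space E, with induced I_i^± and G^±, and let T = (t_{il}) and S = (s_{il}) be matrices in SO(3,ℝ). Define Î_i^+ := Σ_l t_{il} I_l^+ and Î_i^− := Σ_l s_{il} I_l^− for i = 1,2,3. Then the quadruples (Î₁^±, Î₂^±, Î₃^±, G^±) each satisfy the quaternion algebra: (1) Î_i^± Î_j^± = −δ_ij·G^± + Σ_k ε_{ijk} Î_k^±; and (2) G^± G^∓ = 0, G^± Î_i^∓ = 0, Î_i^± G^∓ = 0 and Î_i^± Î_j^∓ = 0, for all i,j ∈ {1,2,3}. -/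
open Matrix

/-- Levi-Civita symbol on `Fin 3` (0-indexed: `eps 0 1 2 = 1`). -/
def eps (i j k : Fin 3) : ℝ :=
  if (i, j, k) = (0, 1, 2) ∨ (i, j, k) = (1, 2, 0) ∨ (i, j, k) = (2, 0, 1) then 1
  else if (i, j, k) = (0, 2, 1) ∨ (i, j, k) = (2, 1, 0) ∨ (i, j, k) = (1, 0, 2) then -1
  else 0

/-!
The element `G` commutes with every `I i` and squares to `1`, and `J i = G * I i`. Hence
`G⁺ = (1 + G) / 2` is an idempotent commuting with the `I i`, it absorbs `G`, and `I⁺ i = G⁺ * I i`;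
multiplying `I i * I (i + 1) = G * I (i + 2)` by `G⁺` gives the quaternion relations of the positive
sector. The negative sector is the positive sector of the Clifford triple `-I`.

The quaternion relations say that linear combinations multiply by
`q(u) * q(v) = -(u ⬝ᵥ v) • g + q(u ⨯₃ v)`, so they pass to the combinations given by the rows of a
rotation matrix, which form an oriented orthonormal frame. They also force `g` to be a unit for
the `q i`, so that two quaternion triples annihilate each other as soon as their units do.
-/

section Rotation

variable {R : Type*} [CommRing R]

theorem adjugate_eq_transpose_of_transpose_mul_self {n : Type*} [Fintype n] [DecidableEq n]
    {T : Matrix n n R} (hT : Tᵀ * T = 1) (hdet : T.det = 1) : T.adjugate = Tᵀ :=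
  calc T.adjugate = Tᵀ * T * T.adjugate := by rw [hT, one_mul]
    _ = Tᵀ := by rw [mul_assoc, mul_adjugate, hdet, one_smul, mul_one]

theorem row_dotProduct_row {n : Type*} [Fintype n] [DecidableEq n] {T : Matrix n n R}
    (hT : Tᵀ * T = 1) (i j : n) : T i ⬝ᵥ T j = if i = j then 1 else 0 := by
  rw [← one_apply, ← mul_eq_one_comm.mp hT]
  rfl

theorem row_crossProduct_row_succ {T : Matrix (Fin 3) (Fin 3) R}
    (hT : Tᵀ * T = 1) (hdet : T.det = 1) (i : Fin 3) : T i ⨯₃ T (i + 1) = T (i + 2) := by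
  have cofactor (j k : Fin 3) : T.adjugate k j = T j k := by
    rw [adjugate_eq_transpose_of_transpose_mul_self hT hdet, transpose_apply]
  ext k
  rw [← cofactor, adjugate_fin_three, cross_apply]
  fin_cases i <;> fin_cases k <;>
    simp only [Fin.zero_eta, Fin.mk_one, Fin.reduceFinMk, Fin.reduceAdd, zero_add, of_apply,
      cons_val] <;>
    ring

end Rotation

/-- The relations satisfied by three quaternion units `q 0, q 1, q 2` and their identity element
`g`, which may differ from `1`; indices are read cyclically in `Fin 3`. -/
structure IsQuaternionTriple {A : Type*} [Ring A] (g : A) (q : Fin 3 → A) : Prop where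
  mul_self (i : Fin 3) : q i * q i = -g
  mul_succ (i : Fin 3) : q i * q (i + 1) = q (i + 2)
  succ_mul (i : Fin 3) : q (i + 1) * q i = -q (i + 2)

namespace IsQuaternionTriple

variable {A : Type*} [Ring A] {g : A} {q : Fin 3 → A}

theorem unit_mul (h : IsQuaternionTriple g q) (i : Fin 3) : g * q i = q i :=
  calc g * q i = -(q (i + 1) * (q (i + 1) * q i)) := by
        rw [← mul_assoc, h.mul_self, neg_mul, neg_neg]
    _ = q (i + 1) * q (i + 1 + 1) := by rw [h.succ_mul, mul_neg, neg_neg, add_assoc]; rfl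
    _ = q i := by rw [h.mul_succ, add_assoc, show (1 + 2 : Fin 3) = 0 from rfl, add_zero]

theorem mul_unit (h : IsQuaternionTriple g q) (i : Fin 3) : q i * g = q i := by
  rw [← neg_neg g, ← h.mul_self i, mul_neg, ← mul_assoc, h.mul_self, neg_mul, neg_neg, h.unit_mul]

theorem unit_mul_eq_zero (h : IsQuaternionTriple g q) {x : A} (hx : x * g = 0) (i : Fin 3) :
    x * q i = 0 := by
  rw [← h.unit_mul, ← mul_assoc, hx, zero_mul]

theorem mul_unit_eq_zero (h : IsQuaternionTriple g q) {x : A} (hx : g * x = 0) (i : Fin 3) :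
    q i * x = 0 := by
  rw [← h.mul_unit, mul_assoc, hx, mul_zero]

theorem sum_smul_mul_sum_smul {R : Type*} [CommRing R] [Algebra R A] (h : IsQuaternionTriple g q)
    (u v : Fin 3 → R) :
    (∑ i, u i • q i) * ∑ j, v j • q j = -(u ⬝ᵥ v) • g + ∑ k, (u ⨯₃ v) k • q k := by
  have h01 : q 0 * q 1 = q 2 := h.mul_succ 0
  have h12 : q 1 * q 2 = q 0 := h.mul_succ 1
  have h20 : q 2 * q 0 = q 1 := h.mul_succ 2
  have h10 : q 1 * q 0 = -q 2 := h.succ_mul 0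
  have h21 : q 2 * q 1 = -q 0 := h.succ_mul 1
  have h02 : q 0 * q 2 = -q 1 := h.succ_mul 2
  simp only [Fin.sum_univ_three, add_mul, mul_add, smul_mul_smul_comm, h.mul_self, h01, h12, h20,
    h10, h21, h02, vec3_dotProduct, cross_apply, cons_val]
  module

theorem rotate {R : Type*} [CommRing R] [Algebra R A] (h : IsQuaternionTriple g q)
    {T : Matrix (Fin 3) (Fin 3) R} (hT : Tᵀ * T = 1) (hdet : T.det = 1) :
    IsQuaternionTriple g fun i ↦ ∑ l, T i l • q l where
  mul_self i := by
    simp [h.sum_smul_mul_sum_smul, row_dotProduct_row hT]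
  mul_succ i := by
    simp [h.sum_smul_mul_sum_smul, row_dotProduct_row hT, row_crossProduct_row_succ hT hdet]
  succ_mul i := by
    simp [h.sum_smul_mul_sum_smul, row_dotProduct_row hT, ← cross_anticomm (T i),
      row_crossProduct_row_succ hT hdet]

theorem mul_eq_sum_eps_smul [Algebra ℝ A] (h : IsQuaternionTriple g q) (i j : Fin 3) :
    q i * q j = (if i = j then -g else 0) + ∑ k, eps i j k • q k := by
  obtain rfl | rfl | rfl : j = i ∨ j = i + 1 ∨ i = j + 1 := by decide +revert
  · rw [h.mul_self]
    fin_cases j <;> simp [eps]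
  · rw [h.mul_succ]
    fin_cases i <;> simp [eps]
  · rw [h.succ_mul]
    fin_cases j <;> simp [eps]

end IsQuaternionTriple

/-- A rank-3 Clifford triple: three anticommuting square roots of `-1`. When `2` is invertible this
is the condition `I i * I j + I j * I i = -2 δ i j` on anticommutators. -/
structure IsCliffordTriple {A : Type*} [Ring A] (I : Fin 3 → A) : Prop where
  mul_self (i : Fin 3) : I i * I i = -1
  anticomm {i j : Fin 3} (hij : i ≠ j) : I i * I j = -(I j * I i)

/-- The element `G = -I₁I₂I₃` of a Clifford triple (with indices starting from `0`). -/
def chirality {A : Type*} [Ring A] (I : Fin 3 → A) : A :=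
  -(I 0 * I 1 * I 2)

/-- The element `G⁺ = (1 + G) / 2` of a Clifford triple `I`; as `chirality (-I) = -chirality I`,
the element `G⁻` is `chiralIdempotent R (-I)`. -/
def chiralIdempotent (R : Type*) {A : Type*} [CommRing R] [Invertible (2 : R)] [Ring A]
    [Algebra R A] (I : Fin 3 → A) : A :=
  ⅟(2 : R) • (1 + chirality I)

/-- The elements `Iᵢ⁺ = (Jᵢ + Iᵢ) / 2` of a Clifford triple `I`, where `Jᵢ = Iᵢ₊₁Iᵢ₊₂` with
indices modulo `3`; the elements `Iᵢ⁻` are `chiralUnit R (-I) i`. -/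
def chiralUnit (R : Type*) {A : Type*} [CommRing R] [Invertible (2 : R)] [Ring A]
    [Algebra R A] (I : Fin 3 → A) (i : Fin 3) : A :=
  ⅟(2 : R) • (I (i + 1) * I (i + 2) + I i)

section Chirality

variable {A : Type*} [Ring A] {I : Fin 3 → A}

theorem chirality_neg : chirality (-I) = -chirality I := by
  simp [chirality]

namespace IsCliffordTriple

theorem of_anticommutator (R : Type*) [CommRing R] [Invertible (2 : R)] [Algebra R A]
    (h : ∀ i j, I i * I j + I j * I i = if i = j then -2 else 0) : IsCliffordTriple I where
  mul_self i := by
    have double : (2 : R) • (I i * I i) = (2 : R) • (-1 : A) := by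
      rw [two_smul, two_smul, h, if_pos rfl, ← neg_add, one_add_one_eq_two]
    exact (isUnit_of_invertible (2 : R)).smul_left_cancel.mp double
  anticomm {i j} hij := eq_neg_of_add_eq_zero_left <| by rw [h, if_neg hij]

protected theorem neg (h : IsCliffordTriple I) : IsCliffordTriple (-I) where
  mul_self i := by simpa using h.mul_self i
  anticomm hij := by simpa using h.anticomm hij

theorem mul_mul_self (h : IsCliffordTriple I) (i : Fin 3) (x : A) : I i * (I i * x) = -x := by
  rw [← mul_assoc, h.mul_self, neg_one_mul]

theorem mul_commute (h : IsCliffordTriple I) {i j k : Fin 3} (hij : i ≠ j) (hik : i ≠ k) :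
    Commute (I i) (I j * I k) :=
  calc I i * (I j * I k) = -(I j * (I i * I k)) := by
        rw [← mul_assoc, h.anticomm hij, neg_mul, mul_assoc]
    _ = I j * I k * I i := by rw [h.anticomm hik, mul_neg, neg_neg, mul_assoc]

theorem chirality_eq (h : IsCliffordTriple I) (i : Fin 3) :
    chirality I = -(I i * (I (i + 1) * I (i + 2))) := by
  have move_first : I 1 * I 2 * I 0 = I 0 * I 1 * I 2 := by
    rw [mul_assoc (I 0), h.mul_commute (i := 0) (j := 1) (k := 2) (by decide) (by decide)]
  have move_last : I 2 * (I 0 * I 1) = I 0 * I 1 * I 2 :=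
    h.mul_commute (by decide) (by decide)
  fin_cases i
  · exact congrArg _ (mul_assoc ..)
  · exact congrArg _ (move_first.symm.trans (mul_assoc ..))
  · exact congrArg _ move_last.symm

theorem mul_chirality (h : IsCliffordTriple I) (i : Fin 3) :
    I i * chirality I = I (i + 1) * I (i + 2) := by
  rw [h.chirality_eq i, mul_neg, h.mul_mul_self, neg_neg]

theorem chirality_mul (h : IsCliffordTriple I) (i : Fin 3) :
    chirality I * I i = I (i + 1) * I (i + 2) := by
  have hJ : Commute (I i) (I (i + 1) * I (i + 2)) := h.mul_commute (by simp) (by simp)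
  rw [h.chirality_eq i, hJ.eq, neg_mul, mul_assoc, h.mul_self, mul_neg_one, neg_neg]

theorem chirality_mul_self (h : IsCliffordTriple I) : chirality I * chirality I = 1 :=
  calc chirality I * chirality I = -(I 1 * I 2 * (I 1 * I 2)) := by
        nth_rw 2 [h.chirality_eq 0]
        rw [mul_neg, ← mul_assoc, h.chirality_mul]
        rfl
    _ = I 1 * (I 2 * (I 2 * I 1)) := by
        rw [h.anticomm (i := 2) (j := 1) (by decide)]
        simp only [mul_assoc, mul_neg]
    _ = 1 := by rw [h.mul_mul_self, mul_neg, h.mul_self, neg_neg]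

variable (R : Type*) [CommRing R] [Invertible (2 : R)] [Algebra R A]

theorem chiralIdempotent_mul_chirality (h : IsCliffordTriple I) :
    chiralIdempotent R I * chirality I = chiralIdempotent R I := by
  rw [chiralIdempotent, smul_mul_assoc, add_mul, one_mul, h.chirality_mul_self, add_comm]

theorem chiralIdempotent_mul_self (h : IsCliffordTriple I) :
    chiralIdempotent R I * chiralIdempotent R I = chiralIdempotent R I := by
  nth_rw 2 [chiralIdempotent]
  rw [mul_smul_comm, mul_add, mul_one, h.chiralIdempotent_mul_chirality R, ← two_smul R, smul_smul,
    invOf_mul_self, one_smul]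

theorem chiralIdempotent_mul_chiralIdempotent_neg (h : IsCliffordTriple I) :
    chiralIdempotent R I * chiralIdempotent R (-I) = 0 := by
  rw [chiralIdempotent.eq_def R (-I), chirality_neg, mul_smul_comm, mul_add, mul_one, mul_neg,
    h.chiralIdempotent_mul_chirality R, add_neg_cancel, smul_zero]

theorem chiralIdempotent_commute (h : IsCliffordTriple I) (i : Fin 3) :
    Commute (chiralIdempotent R I) (I i) :=
  have chirality_commute : Commute (chirality I) (I i) :=
    (h.chirality_mul i).trans (h.mul_chirality i).symm
  ((Commute.one_left _).add_left chirality_commute).smul_left _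

theorem chiralUnit_eq (h : IsCliffordTriple I) (i : Fin 3) :
    chiralUnit R I i = chiralIdempotent R I * I i := by
  rw [chiralUnit, ← h.chirality_mul, chiralIdempotent, smul_mul_assoc, add_mul, one_mul, add_comm]

theorem chiralUnit_mul_chiralUnit (h : IsCliffordTriple I) (i j : Fin 3) :
    chiralUnit R I i * chiralUnit R I j = chiralIdempotent R I * (I i * I j) := by
  rw [h.chiralUnit_eq R, h.chiralUnit_eq R, (h.chiralIdempotent_commute R i).symm.mul_mul_mul_comm,
    h.chiralIdempotent_mul_self R]

theorem isQuaternionTriple_chiralUnit (h : IsCliffordTriple I) :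
    IsQuaternionTriple (chiralIdempotent R I) (chiralUnit R I) := by
  have mul_succ (i : Fin 3) :
      chiralUnit R I i * chiralUnit R I (i + 1) = chiralUnit R I (i + 2) := by
    have hJ : I i * I (i + 1) = chirality I * I (i + 2) := by
      rw [h.chirality_mul, add_assoc, add_assoc]
      simp
    rw [h.chiralUnit_mul_chiralUnit R, hJ, ← mul_assoc, h.chiralIdempotent_mul_chirality R,
      h.chiralUnit_eq R]
  refine ⟨fun i ↦ ?_, mul_succ, fun i ↦ ?_⟩
  · rw [h.chiralUnit_mul_chiralUnit R, h.mul_self, mul_neg_one]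
  · rw [← mul_succ, h.chiralUnit_mul_chiralUnit R, h.chiralUnit_mul_chiralUnit R,
      h.anticomm (by simp), mul_neg]

end IsCliffordTriple

end Chirality

theorem rotated_quaternion_relations_general
    {R A : Type*} [CommRing R] [Invertible (2 : R)] [Ring A] [Algebra R A]
    (I : Fin 3 → A) (hCl : ∀ i j, I i * I j + I j * I i = if i = j then -2 else 0)
    (J : Fin 3 → A) (hJ0 : J 0 = I 1 * I 2) (hJ1 : J 1 = I 2 * I 0) (hJ2 : J 2 = I 0 * I 1)
    (G : A) (hG : G = -(I 0 * I 1 * I 2))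
    (Ip Im : Fin 3 → A)
    (hIp : ∀ i, Ip i = ⅟(2 : R) • (J i + I i)) (hIm : ∀ i, Im i = ⅟(2 : R) • (J i - I i))
    (Gp Gm : A) (hGp : Gp = ⅟(2 : R) • (1 + G)) (hGm : Gm = ⅟(2 : R) • (1 - G))
    (T S : Matrix (Fin 3) (Fin 3) R)
    (hT : Tᵀ * T = 1) (hTdet : T.det = 1) (hS : Sᵀ * S = 1) (hSdet : S.det = 1)
    (Ihp Ihm : Fin 3 → A)
    (hIhp : ∀ i, Ihp i = ∑ l, T i l • Ip l) (hIhm : ∀ i, Ihm i = ∑ l, S i l • Im l) :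
    IsQuaternionTriple Gp Ihp ∧ IsQuaternionTriple Gm Ihm ∧
    (Gp * Gm = 0 ∧ Gm * Gp = 0 ∧
     (∀ i, Gp * Ihm i = 0) ∧ (∀ i, Gm * Ihp i = 0) ∧
     (∀ i, Ihp i * Gm = 0) ∧ (∀ i, Ihm i * Gp = 0) ∧
     (∀ i j, Ihp i * Ihm j = 0) ∧ (∀ i j, Ihm i * Ihp j = 0)) := by
  have hI : IsCliffordTriple I := .of_anticommutator R hCl
  have hJ (i : Fin 3) : J i = I (i + 1) * I (i + 2) := by
    fin_cases i
    exacts [hJ0, hJ1, hJ2]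
  obtain rfl : Gp = chiralIdempotent R I := by rw [hGp, hG, chiralIdempotent, chirality]
  obtain rfl : Gm = chiralIdempotent R (-I) := by
    rw [hGm, hG, chiralIdempotent, chirality_neg, chirality, sub_eq_add_neg]
  obtain rfl : Ip = chiralUnit R I := funext fun i ↦ by rw [hIp, hJ, chiralUnit]
  obtain rfl : Im = chiralUnit R (-I) := funext fun i ↦ by
    simp [hIm, hJ, chiralUnit, sub_eq_add_neg]
  have hp : IsQuaternionTriple (chiralIdempotent R I) Ihp :=
    funext hIhp ▸ (hI.isQuaternionTriple_chiralUnit R).rotate hT hTdet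
  have hm : IsQuaternionTriple (chiralIdempotent R (-I)) Ihm :=
    funext hIhm ▸ (hI.neg.isQuaternionTriple_chiralUnit R).rotate hS hSdet
  have hpm := hI.chiralIdempotent_mul_chiralIdempotent_neg R
  have hmp := neg_neg I ▸ hI.neg.chiralIdempotent_mul_chiralIdempotent_neg R
  exact ⟨hp, hm, hpm, hmp, hm.unit_mul_eq_zero hpm, hp.unit_mul_eq_zero hmp,
    hp.mul_unit_eq_zero hpm, hm.mul_unit_eq_zero hmp,
    fun i ↦ hm.unit_mul_eq_zero (hp.mul_unit_eq_zero hpm i),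
    fun i ↦ hp.unit_mul_eq_zero (hm.mul_unit_eq_zero hmp i)⟩

/-- the rotated endomorphisms `Î_i^+ = Σ_l t_{il} I_l^+` and
`Î_i^- = Σ_l s_{il} I_l^-` (for `T, S ∈ SO(3,ℝ)`) together with `G^±` each satisfy
the quaternion algebra, and the two sectors annihilate each other. -/
theorem rotated_quaternion_relations
    {E : Type*} [AddCommGroup E] [Module ℝ E]
    (I : Fin 3 → Module.End ℝ E)
    (hCl : ∀ i j, I i * I j + I j * I i = if i = j then (-2 : Module.End ℝ E) else 0)
    (J : Fin 3 → Module.End ℝ E)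
    (hJ0 : J 0 = I 1 * I 2) (hJ1 : J 1 = I 2 * I 0) (hJ2 : J 2 = I 0 * I 1)
    (G : Module.End ℝ E) (hG : G = -(I 0 * I 1 * I 2))
    (Ip Im : Fin 3 → Module.End ℝ E)
    (hIp : ∀ i, Ip i = (1 / 2 : ℝ) • (J i + I i))
    (hIm : ∀ i, Im i = (1 / 2 : ℝ) • (J i - I i))
    (Gp Gm : Module.End ℝ E)
    (hGp : Gp = (1 / 2 : ℝ) • (1 + G))
    (hGm : Gm = (1 / 2 : ℝ) • (1 - G))
    (T S : Matrix (Fin 3) (Fin 3) ℝ)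
    (hT : Tᵀ * T = 1) (hTdet : T.det = 1)
    (hS : Sᵀ * S = 1) (hSdet : S.det = 1)
    (Ihp Ihm : Fin 3 → Module.End ℝ E)
    (hIhp : ∀ i, Ihp i = ∑ l, T i l • Ip l)
    (hIhm : ∀ i, Ihm i = ∑ l, S i l • Im l) :
    -- (1) quaternion algebra in each sector
    (∀ i j, Ihp i * Ihp j = (if i = j then -Gp else 0) + ∑ k, eps i j k • Ihp k) ∧
    (∀ i j, Ihm i * Ihm j = (if i = j then -Gm else 0) + ∑ k, eps i j k • Ihm k) ∧
    -- (2) the two sectors annihilate each other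
    (Gp * Gm = 0 ∧ Gm * Gp = 0 ∧
     (∀ i, Gp * Ihm i = 0) ∧ (∀ i, Gm * Ihp i = 0) ∧
     (∀ i, Ihp i * Gm = 0) ∧ (∀ i, Ihm i * Gp = 0) ∧
     (∀ i j, Ihp i * Ihm j = 0) ∧ (∀ i j, Ihm i * Ihp j = 0)) := by
  let _ : Invertible (2 : ℝ) := invertibleOfNonzero two_ne_zero
  simp only [one_div, ← invOf_eq_inv] at hIp hIm hGp hGm
  obtain ⟨hp, hm, annihilate⟩ := rotated_quaternion_relations_general I hCl J hJ0 hJ1 hJ2 G hG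
    Ip Im hIp hIm Gp Gm hGp hGm T S hT hTdet hS hSdet Ihp Ihm hIhp hIhm
  exact ⟨hp.mul_eq_sum_eps_smul, hm.mul_eq_sum_eps_smul, annihilate⟩
end

section
/- Let E be a real vector space equipped with an ℝ-bilinear bracket [·,·] and a symmetric bilinear form ⟨·,·⟩. Let (I₁,I₂,I₃) be a rank-3 Clifford triple on E such that each I_i is orthogonal (⟨I_iA, I_iB⟩ = ⟨A,B⟩ for all A,B ∈ E) and N(I_i,I_i) = 0 for i = 1,2,3. Let T = (t_{il}) and S = (s_{il}) be matrices in SO(3,ℝ), and define K_i := Σ_l (t_{il} I_l^+ + s_{il} I_l^−) for i = 1,2,3. Then: K_i² = −Id for each i; K_iK_j = −K_jK_i for i ≠ j (so (K₁,K₂,K₃) satisfies the rank-3 Clifford relations K_iK_j + K_jK_i = −2δ_ij·Id); each K_i is orthogonal, i.e. ⟨K_iA, K_iB⟩ = ⟨A,B⟩; and N(K_i,K_j) = 0 for all i,j = 1,2,3. -/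
open Matrix

/-!
A bilinear map with `B(I_l, I_m) = B(J_l, J_m) = δ_lm x` and `B(I_l, J_m) = B(J_l, I_m) = δ_lm y`
satisfies `B(K_i, K_j) = δ_ij x`, since the cross terms between `I^+` and `I^-` cancel and `T`, `S`
have orthonormal rows. This applies to the anticommutator, with `x = -2` and `y = -2G`, and to the
concomitant `N`, with `x = 0`. Orthogonality passes to `K_i` because, for an endomorphism of square
`-1`, it is the linear condition of being skew-adjoint.

The work lies in evaluating `N`. If `N(X, X) = 0` and `X`, `Y` anticommute, then applying `X` to
either argument of the form `N(X, Y)` amounts to applying `-X` to its value. When also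
`N(Y, Y) = 0`, evaluating `N(X, Y)(XA, YB)` in two orders gives `XY N(X, Y) = YX N(X, Y)`, so
`N(X, Y) = 0` whenever `X²`, `Y²` are invertible scalars. The same argument for `X + GY` and
`Y - GX` yields `N(X, GX) = N(Y, GY)`, which is the common value `y` needed for `N(I_l, J_l)`.
-/

section BilinearRotation

variable {R M N ι κ : Type*} [CommRing R] [AddCommGroup M] [Module R M] [AddCommGroup N]
  [Module R N] [Fintype ι]

/-- The Clifford rotation `i ↦ Σ_l (T_{il} u_l^+ + S_{il} u_l^-)` of a pair of families `u`, `v`,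
where `u_l^± = (v_l ± u_l) / 2`. The paper's rotation is the case `u = I`, `v = J`. -/
def cliffordRotation [Invertible (2 : R)] (u v : ι → M) (T S : Matrix κ ι R) (i : κ) : M :=
  ∑ l, (T i l • ((⅟2 : R) • (v l + u l)) + S i l • ((⅟2 : R) • (v l - u l)))

lemma cliffordRotation_mem [Invertible (2 : R)] {u v : ι → M} {p : Submodule R M}
    (hu : ∀ l, u l ∈ p) (hv : ∀ l, v l ∈ p) (T S : Matrix κ ι R) (i : κ) :
    cliffordRotation u v T S i ∈ p :=
  p.sum_mem fun l _ ↦ p.add_mem (p.smul_mem _ (p.smul_mem _ (p.add_mem (hv l) (hu l))))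
    (p.smul_mem _ (p.smul_mem _ (p.sub_mem (hv l) (hu l))))

variable [DecidableEq ι] (B : M →ₗ[R] M →ₗ[R] N)

lemma bilin_sum_smul {p q : ι → M} {x : N}
    (hpq : ∀ l m, B (p l) (q m) = if l = m then x else 0) (T S : Matrix κ ι R) (i j : κ) :
    B (∑ l, T i l • p l) (∑ l, S j l • q l) = (T * Sᵀ) i j • x := by
  simp only [map_sum, map_smul, LinearMap.sum_apply, LinearMap.smul_apply, hpq, smul_ite,
    smul_zero, Finset.sum_ite_eq', Finset.mem_univ, if_true, smul_smul, ← Finset.sum_smul,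
    Matrix.mul_apply, Matrix.transpose_apply, mul_comm]

lemma bilin_sum_smul_add_smul {p q : ι → M} {x y : N}
    (hpp : ∀ l m, B (p l) (p m) = if l = m then x else 0)
    (hqq : ∀ l m, B (q l) (q m) = if l = m then y else 0)
    (hpq : ∀ l m, B (p l) (q m) = 0) (hqp : ∀ l m, B (q l) (p m) = 0)
    (T S : Matrix κ ι R) (i j : κ) :
    B (∑ l, (T i l • p l + S i l • q l)) (∑ l, (T j l • p l + S j l • q l)) =
      (T * Tᵀ) i j • x + (S * Sᵀ) i j • y := by
  have hpq' : B (∑ l, T i l • p l) (∑ l, S j l • q l) = 0 := by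
    rw [bilin_sum_smul B (x := 0) (fun l m ↦ by rw [hpq, ite_self]), smul_zero]
  have hqp' : B (∑ l, S i l • q l) (∑ l, T j l • p l) = 0 := by
    rw [bilin_sum_smul B (x := 0) (fun l m ↦ by rw [hqp, ite_self]), smul_zero]
  simp only [Finset.sum_add_distrib, map_add, LinearMap.add_apply, bilin_sum_smul B hpp,
    bilin_sum_smul B hqq, hpq', hqp', add_zero, zero_add]

lemma bilin_cliffordRotation [Invertible (2 : R)] [DecidableEq κ] {u v : ι → M} {x y : N}
    (huu : ∀ l m, B (u l) (u m) = if l = m then x else 0)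
    (hvv : ∀ l m, B (v l) (v m) = if l = m then x else 0)
    (huv : ∀ l m, B (u l) (v m) = if l = m then y else 0)
    (hvu : ∀ l m, B (v l) (u m) = if l = m then y else 0)
    {T S : Matrix κ ι R} (hT : T * Tᵀ = 1) (hS : S * Sᵀ = 1) (i j : κ) :
    B (cliffordRotation u v T S i) (cliffordRotation u v T S j) = if i = j then x else 0 := by
  have half (z : N) : (⅟2 : R) • (z + z) = z := by
    rw [smul_add, invOf_two_smul_add_invOf_two_smul]
  have huu_add (l m) : B ((⅟2 : R) • (v l + u l)) ((⅟2 : R) • (v m + u m)) =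
      if l = m then (⅟2 : R) • (x + y) else 0 := by
    simp only [map_smul, map_add, LinearMap.smul_apply, LinearMap.add_apply, huu, hvv, huv, hvu]
    split_ifs
    · rw [add_comm y x, half]
    · simp only [add_zero, smul_zero]
  have huu_sub (l m) : B ((⅟2 : R) • (v l - u l)) ((⅟2 : R) • (v m - u m)) =
      if l = m then (⅟2 : R) • (x - y) else 0 := by
    simp only [map_smul, map_sub, LinearMap.smul_apply, LinearMap.sub_apply, huu, hvv, huv, hvu]
    split_ifs
    · rw [← neg_sub x y, smul_neg, sub_neg_eq_add, ← smul_add, half]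
    · simp only [sub_zero, smul_zero]
  have hadd_sub (l m) : B ((⅟2 : R) • (v l + u l)) ((⅟2 : R) • (v m - u m)) = 0 := by
    simp only [map_smul, map_sub, map_add, LinearMap.smul_apply, LinearMap.add_apply, huu, hvv,
      huv, hvu]
    module
  have hsub_add (l m) : B ((⅟2 : R) • (v l - u l)) ((⅟2 : R) • (v m + u m)) = 0 := by
    simp only [map_smul, map_sub, map_add, LinearMap.smul_apply, LinearMap.sub_apply, huu, hvv,
      huv, hvu]
    module
  rw [cliffordRotation, cliffordRotation,
    bilin_sum_smul_add_smul B huu_add huu_sub hadd_sub hsub_add, hT, hS, ← smul_add, ← smul_add,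
    add_add_sub_cancel, half, Matrix.one_apply, ite_smul, one_smul, zero_smul]

end BilinearRotation

section CliffordFamily

variable {A ι : Type*} [Ring A]

/-- The Clifford relations `I_i I_j + I_j I_i = -2 δ_ij`, with the case `i = j` divided by `2` so
that the notion is the right one in every characteristic. -/
structure IsCliffordFamily (I : ι → A) : Prop where
  mul_self : ∀ i, I i * I i = -1
  anticomm : Pairwise fun i j ↦ I i * I j = -(I j * I i)

lemma isCliffordFamily_iff (R : Type*) [CommRing R] [Algebra R A] [Invertible (2 : R)]
    [DecidableEq ι] {I : ι → A} :
    IsCliffordFamily I ↔ ∀ i j, I i * I j + I j * I i = if i = j then -2 else 0 := by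
  refine ⟨fun hI i j ↦ ?_, fun hI ↦ ⟨fun i ↦ ?_, fun i j hij ↦ ?_⟩⟩
  · split_ifs with hij
    · rw [hij, hI.mul_self, ← neg_add, one_add_one_eq_two]
    · rw [hI.anticomm hij, neg_add_cancel]
  · have h : I i * I i + I i * I i = -1 + -1 := by
      rw [hI, if_pos rfl, ← neg_add, one_add_one_eq_two]
    rw [← two_smul R, ← two_smul R] at h
    exact (isUnit_of_invertible (2 : R)).smul_left_cancel.1 h
  · exact eq_neg_of_add_eq_zero_left ((hI i j).trans (if_neg hij))

lemma commute_mul_of_anticomm {x y z : A} (hxy : x * y = -(y * x)) (hxz : x * z = -(z * x)) :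
    Commute x (y * z) := by
  rw [Commute, SemiconjBy, ← mul_assoc, hxy, neg_mul, mul_assoc, hxz, mul_neg, neg_neg, mul_assoc]

lemma mul_mul_self_of_anticomm {x y : A} (hx : x * x = -1) (hy : y * y = -1)
    (hxy : x * y = -(y * x)) : x * y * (x * y) = -1 := by
  nth_rw 1 [hxy]
  rw [neg_mul, mul_assoc, ← mul_assoc x, hx, neg_one_mul, mul_neg, neg_neg, hy]

/-- The products `J₁ = I₂I₃`, `J₂ = I₃I₁`, `J₃ = I₁I₂`, with cyclic indices in `Fin 3`. -/
def cliffordDual (I : Fin 3 → A) (i : Fin 3) : A := I (i + 1) * I (i + 2)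

/-- The element `G = -I₁I₂I₃`. -/
def cliffordVolume (I : Fin 3 → A) : A := -(I 0 * I 1 * I 2)

namespace IsCliffordFamily

variable {I : Fin 3 → A} (hI : IsCliffordFamily I)
include hI

lemma anticomm_add_one_add_two (i : Fin 3) : I (i + 1) * I (i + 2) = -(I (i + 2) * I (i + 1)) :=
  hI.anticomm (by simp)

lemma commute_cliffordDual (i : Fin 3) : Commute (I i) (cliffordDual I i) :=
  commute_mul_of_anticomm (hI.anticomm (by simp)) (hI.anticomm (by simp))

lemma mul_cliffordDual_self (i : Fin 3) : I i * cliffordDual I i = -cliffordVolume I := by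
  rw [cliffordVolume, neg_neg]
  fin_cases i
  · exact (mul_assoc (I 0) (I 1) (I 2)).symm
  · exact (mul_assoc (I 1) (I 2) (I 0)).symm.trans (hI.commute_cliffordDual 0).eq.symm |>.trans
      (mul_assoc (I 0) (I 1) (I 2)).symm
  · exact (hI.commute_cliffordDual 2).eq

lemma volume_mul (i : Fin 3) : cliffordVolume I * I i = cliffordDual I i := by
  rw [← neg_neg (cliffordVolume I), ← hI.mul_cliffordDual_self i, (hI.commute_cliffordDual i).eq,
    neg_mul, mul_assoc, hI.mul_self, mul_neg_one, neg_neg]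

lemma commute_volume (i : Fin 3) : Commute (cliffordVolume I) (I i) := by
  rw [← neg_neg (cliffordVolume I), ← hI.mul_cliffordDual_self i]
  exact ((Commute.refl (I i)).mul_left (hI.commute_cliffordDual i).symm).neg_left

lemma volume_mul_self : cliffordVolume I * cliffordVolume I = 1 := by
  have h : cliffordDual I 0 * cliffordDual I 0 = -1 :=
    mul_mul_self_of_anticomm (hI.mul_self _) (hI.mul_self _) (hI.anticomm (by simp))
  rw [← hI.volume_mul, (hI.commute_volume 0).symm.mul_mul_mul_comm, hI.mul_self, mul_neg_one] at h
  exact neg_injective h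

lemma cliffordDual_mul (i j : Fin 3) :
    cliffordDual I i * I j = cliffordVolume I * (I i * I j) := by
  rw [← hI.volume_mul, mul_assoc]

lemma mul_cliffordDual (i j : Fin 3) :
    I i * cliffordDual I j = cliffordVolume I * (I i * I j) := by
  rw [← hI.volume_mul, ← mul_assoc, ← (hI.commute_volume i).eq, mul_assoc]

lemma cliffordDual_mul_cliffordDual (i j : Fin 3) :
    cliffordDual I i * cliffordDual I j = I i * I j := by
  rw [← hI.volume_mul i, mul_assoc, hI.mul_cliffordDual, ← mul_assoc, hI.volume_mul_self,
    one_mul]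

lemma dual : IsCliffordFamily (cliffordDual I) where
  mul_self i := by rw [hI.cliffordDual_mul_cliffordDual, hI.mul_self]
  anticomm i j hij := by
    simp only [hI.cliffordDual_mul_cliffordDual]
    exact hI.anticomm hij

lemma mul_cliffordDual_anticomm {i j : Fin 3} (hij : i ≠ j) :
    I i * cliffordDual I j = -(cliffordDual I j * I i) := by
  rw [hI.mul_cliffordDual, hI.cliffordDual_mul, hI.anticomm hij, mul_neg]

end IsCliffordFamily

theorem IsCliffordFamily.rotation {R κ : Type*} [CommRing R] [Algebra R A]
    [Invertible (2 : R)] [DecidableEq κ] {I : Fin 3 → A} (hI : IsCliffordFamily I)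
    {T S : Matrix κ (Fin 3) R} (hT : T * Tᵀ = 1) (hS : S * Sᵀ = 1) :
    IsCliffordFamily (cliffordRotation I (cliffordDual I) T S) := by
  have hII := (isCliffordFamily_iff R).1 hI
  refine (isCliffordFamily_iff R).2 <|
    bilin_cliffordRotation (LinearMap.mul R A + (LinearMap.mul R A).flip)
      (y := cliffordVolume I * -2) hII ((isCliffordFamily_iff R).1 hI.dual)
      (fun l m ↦ ?_) (fun l m ↦ ?_) hT hS
  · change I l * cliffordDual I m + cliffordDual I m * I l = _
    rw [hI.mul_cliffordDual, hI.cliffordDual_mul, ← mul_add, hII, mul_ite, mul_zero]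
  · change cliffordDual I l * I m + I m * cliffordDual I l = _
    rw [hI.mul_cliffordDual, hI.cliffordDual_mul, ← mul_add, hII, mul_ite, mul_zero]

end CliffordFamily

section Nijenhuis

variable {R E : Type*} [CommRing R] [AddCommGroup E] [Module R E]

/-- Twice the Nijenhuis concomitant, as a bilinear function of the two endomorphisms. The factor
`1 / 2` of `Nij` is left out so that the definition makes sense over every commutative ring. -/
def nijenhuis (br : E →ₗ[R] E →ₗ[R] E) :
    Module.End R E →ₗ[R] Module.End R E →ₗ[R] E →ₗ[R] E →ₗ[R] E := by
  refine LinearMap.mk₂ R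
    (fun X Y ↦ br.compl₁₂ X Y + br.compl₁₂ Y X - (br.compl₂ Y + br ∘ₗ Y).compr₂ X
      - (br.compl₂ X + br ∘ₗ X).compr₂ Y + br.compr₂ (X * Y + Y * X)) ?_ ?_ ?_ ?_
  all_goals
    intros
    ext
    simp only [LinearMap.add_apply, LinearMap.sub_apply, LinearMap.smul_apply,
      LinearMap.compl₁₂_apply, LinearMap.compr₂_apply, LinearMap.comp_apply, LinearMap.compl₂_apply,
      Module.End.mul_apply, map_add, map_smul]
    module

variable (br : E →ₗ[R] E →ₗ[R] E)

lemma nijenhuis_apply (X Y : Module.End R E) (A B : E) :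
    nijenhuis br X Y A B = br (X A) (Y B) + br (Y A) (X B) - X (br A (Y B) + br (Y A) B)
      - Y (br A (X B) + br (X A) B) + (X (Y (br A B)) + Y (X (br A B))) := rfl

lemma nij_eq_smul_nijenhuis {V : Type*} [AddCommGroup V] [Module ℝ V] (br : V →ₗ[ℝ] V →ₗ[ℝ] V)
    (X Y : Module.End ℝ V) (A B : V) :
    Nij br X Y A B = (1 / 2 : ℝ) • nijenhuis br X Y A B := by
  simp only [Nij, nijenhuis_apply, map_add]
  module

lemma nijenhuis_comm (X Y : Module.End R E) : nijenhuis br X Y = nijenhuis br Y X := by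
  ext A B
  simp only [nijenhuis_apply]
  abel

lemma nijenhuis_flip (X Y : Module.End R E) (A B : E) :
    nijenhuis br.flip X Y B A = nijenhuis br X Y A B := by
  simp only [nijenhuis_apply, LinearMap.flip_apply, map_add]
  abel

variable {br} {X Y : Module.End R E} {c d : R}

lemma nijenhuis_self_eq_zero_iff [Invertible (2 : R)] :
    nijenhuis br X X = 0 ↔
      ∀ A B, br (X A) (X B) = X (br A (X B) + br (X A) B) - X (X (br A B)) := by
  have two_smul_defect (A B : E) : nijenhuis br X X A B =
      (2 : R) • (br (X A) (X B) - (X (br A (X B) + br (X A) B) - X (X (br A B)))) := by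
    rw [nijenhuis_apply]
    module
  simp only [LinearMap.ext_iff, two_smul_defect, LinearMap.zero_apply,
    (isUnit_of_invertible (2 : R)).smul_eq_zero, sub_eq_zero]

lemma nijenhuis_apply_left [Invertible (2 : R)] (hX : X * X = c • 1) (hXY : X * Y = -(Y * X))
    (hXX : nijenhuis br X X = 0) (A B : E) :
    nijenhuis br X Y (X A) B = -X (nijenhuis br X Y A B) := by
  have hXv (v : E) : X (X v) = c • v := LinearMap.congr_fun hX v
  have hXYv (v : E) : X (Y v) = -Y (X v) := LinearMap.congr_fun hXY v
  rw [nijenhuis_self_eq_zero_iff] at hXX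
  have at_A_B := congrArg Y (hXX A B)
  have at_YA_B := hXX (Y A) B
  simp only [nijenhuis_apply, map_add, map_sub, map_neg, map_smul, LinearMap.neg_apply,
    LinearMap.smul_apply, hXv, hXYv] at at_A_B at_YA_B ⊢
  linear_combination (norm := module) -at_A_B - at_YA_B

lemma nijenhuis_apply_right [Invertible (2 : R)] (hX : X * X = c • 1) (hXY : X * Y = -(Y * X))
    (hXX : nijenhuis br X X = 0) (A B : E) :
    nijenhuis br X Y A (X B) = -X (nijenhuis br X Y A B) := by
  have hflip : nijenhuis br.flip X X = 0 := by
    ext A B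
    rw [nijenhuis_flip, hXX]
    rfl
  rw [← nijenhuis_flip, ← nijenhuis_flip br]
  exact nijenhuis_apply_left hX hXY hflip B A

theorem nijenhuis_eq_zero_of_anticomm [Invertible (2 : R)] (hX : X * X = c • 1)
    (hY : Y * Y = d • 1) (hc : IsUnit c) (hd : IsUnit d) (hXY : X * Y = -(Y * X))
    (hXX : nijenhuis br X X = 0) (hYY : nijenhuis br Y Y = 0) : nijenhuis br X Y = 0 := by
  have hYX : Y * X = -(X * Y) := by rw [hXY, neg_neg]
  have hXv (v : E) : X (X v) = c • v := LinearMap.congr_fun hX v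
  have hYv (v : E) : Y (Y v) = d • v := LinearMap.congr_fun hY v
  have hXYv (v : E) : X (Y v) = -Y (X v) := LinearMap.congr_fun hXY v
  ext A B
  set n := nijenhuis br X Y A B
  have eq_XY : nijenhuis br X Y (X A) (Y B) = X (Y n) := by
    rw [nijenhuis_apply_left hX hXY hXX, nijenhuis_comm, nijenhuis_apply_right hY hYX hYY,
      nijenhuis_comm, map_neg, neg_neg]
  have eq_YX : nijenhuis br X Y (X A) (Y B) = Y (X n) := by
    rw [nijenhuis_comm, nijenhuis_apply_right hY hYX hYY, nijenhuis_comm,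
      nijenhuis_apply_left hX hXY hXX, map_neg, neg_neg]
  have hYXn : (2 : R) • Y (X n) = 0 := by
    rw [two_smul, add_eq_zero_iff_eq_neg, ← hXYv, ← eq_XY, eq_YX]
  have hXn : X n = 0 := by
    have := congrArg Y ((isUnit_of_invertible (2 : R)).smul_eq_zero.1 hYXn)
    rwa [hYv, map_zero, hd.smul_eq_zero] at this
  have := congrArg X hXn
  rwa [hXv, map_zero, hc.smul_eq_zero] at this

lemma nijenhuis_mul_mul_apply (hX : X * X = -1) (hY : Y * Y = -1) (hXY : X * Y = -(Y * X))
    (A B : E) :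
    nijenhuis br (X * Y) (X * Y) A B = nijenhuis br Y Y A B - Y (nijenhuis br X X A (Y B)) +
      (2 : R) • Y (nijenhuis br X Y (X (Y A)) (Y B)) := by
  have hXv (v : E) : X (X v) = -v := LinearMap.congr_fun hX v
  have hYv (v : E) : Y (Y v) = -v := LinearMap.congr_fun hY v
  have hXYv (v : E) : X (Y v) = -Y (X v) := LinearMap.congr_fun hXY v
  simp only [nijenhuis_apply, Module.End.mul_apply, map_add, map_sub, map_neg,
    LinearMap.neg_apply, hXv, hYv, hXYv, neg_neg]
  module

/-- A complex structure on `E` that is integrable with respect to the bracket `br`: an abstract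
generalized complex structure without its orthogonality. -/
structure IsIntegrableComplex (br : E →ₗ[R] E →ₗ[R] E) (X : Module.End R E) : Prop where
  mul_self : X * X = -1
  nijenhuis_self : nijenhuis br X X = 0

namespace IsIntegrableComplex

lemma neg (hX : IsIntegrableComplex br X) : IsIntegrableComplex br (-X) where
  mul_self := by rw [neg_mul_neg, hX.mul_self]
  nijenhuis_self := by rw [map_neg, map_neg, LinearMap.neg_apply, neg_neg, hX.nijenhuis_self]

lemma add_mul_add_self (hX : IsIntegrableComplex br X) (hY : IsIntegrableComplex br Y)
    (hXY : X * Y = -(Y * X)) : (X + Y) * (X + Y) = (-2 : R) • 1 := by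
  rw [add_mul, mul_add, mul_add, hX.mul_self, hY.mul_self, hXY, neg_smul, two_smul]
  abel

variable [Invertible (2 : R)]

lemma nijenhuis_eq_zero (hX : IsIntegrableComplex br X) (hY : IsIntegrableComplex br Y)
    (hXY : X * Y = -(Y * X)) : nijenhuis br X Y = 0 :=
  nijenhuis_eq_zero_of_anticomm (c := -1) (d := -1) (by rw [hX.mul_self, neg_one_smul])
    (by rw [hY.mul_self, neg_one_smul]) isUnit_one.neg isUnit_one.neg hXY hX.nijenhuis_self
    hY.nijenhuis_self

lemma mul (hX : IsIntegrableComplex br X) (hY : IsIntegrableComplex br Y)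
    (hXY : X * Y = -(Y * X)) : IsIntegrableComplex br (X * Y) where
  mul_self := mul_mul_self_of_anticomm hX.mul_self hY.mul_self hXY
  nijenhuis_self := by
    ext A B
    simp only [nijenhuis_mul_mul_apply hX.mul_self hY.mul_self hXY, hX.nijenhuis_self,
      hY.nijenhuis_self, hX.nijenhuis_eq_zero hY hXY, LinearMap.zero_apply, map_zero, smul_zero,
      sub_zero, add_zero]

lemma nijenhuis_add_add (hX : IsIntegrableComplex br X) (hY : IsIntegrableComplex br Y)
    (hXY : X * Y = -(Y * X)) : nijenhuis br (X + Y) (X + Y) = 0 := by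
  simp only [map_add, LinearMap.add_apply, hX.nijenhuis_self, hY.nijenhuis_self,
    nijenhuis_comm br Y X, hX.nijenhuis_eq_zero hY hXY, add_zero]

-- The concomitant of `X + GY` and `Y - GX` vanishes; it is the difference of the two sides.
theorem nijenhuis_mul_left_eq {G : Module.End R E} (hX : IsIntegrableComplex br X)
    (hY : IsIntegrableComplex br Y) (hXY : X * Y = -(Y * X)) (hG : G * G = 1)
    (hGX : Commute G X) (hGY : Commute G Y) (hGX' : IsIntegrableComplex br (G * X))
    (hGY' : IsIntegrableComplex br (G * Y)) :
    nijenhuis br X (G * X) = nijenhuis br Y (G * Y) := by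
  have mul_G {Z : Module.End R E} (hZ : Commute G Z) (W) : Z * (G * W) = G * (Z * W) :=
    hZ.symm.left_comm W
  have G_mul_G {Z : Module.End R E} (hZ : Commute G Z) (W) : G * Z * (G * W) = Z * W := by
    rw [mul_assoc, mul_G hZ, ← mul_assoc, hG, one_mul]
  have hX_GY : X * (G * Y) = -(G * Y * X) := by rw [mul_G hGX, mul_assoc, hXY, mul_neg]
  have hY_GX : Y * -(G * X) = -(-(G * X) * Y) := by
    rw [mul_neg, mul_G hGY, neg_mul, neg_neg, mul_assoc, hXY, mul_neg]
  have hGX_GY : G * X * (G * Y) = -(G * Y * (G * X)) := by rw [G_mul_G hGX, G_mul_G hGY, hXY]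
  have hUV : (X + G * Y) * (Y + -(G * X)) = -((Y + -(G * X)) * (X + G * Y)) := by
    simp only [add_mul, mul_add, neg_mul, mul_neg, G_mul_G hGX, G_mul_G hGY, mul_G hGX,
      mul_G hGY, mul_assoc G, hX.mul_self, hY.mul_self, hXY]
    abel
  have htwo : IsUnit (-2 : R) := (isUnit_of_invertible (2 : R)).neg
  have key := nijenhuis_eq_zero_of_anticomm (hX.add_mul_add_self hGY' hX_GY)
    (hY.add_mul_add_self hGX'.neg hY_GX) htwo htwo hUV (hX.nijenhuis_add_add hGY' hX_GY)
    (hY.nijenhuis_add_add hGX'.neg hY_GX)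
  simp only [map_add, map_neg, LinearMap.add_apply, hX.nijenhuis_eq_zero hY hXY,
    hGX'.nijenhuis_eq_zero hGY' hGX_GY, nijenhuis_comm br (G * Y), zero_add, add_zero] at key
  exact neg_add_eq_zero.1 ((add_comm _ _).trans key)

end IsIntegrableComplex

end Nijenhuis

section SkewAdjoint

variable {R E : Type*} [CommRing R] [AddCommGroup E] [Module R E] {P : LinearMap.BilinForm R E}
  {X Y : Module.End R E}

lemma mem_skewAdjointSubmodule_iff_isOrthogonal (hX : X * X = -1) :
    X ∈ P.skewAdjointSubmodule ↔ P.IsOrthogonal X := by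
  have hXv (v : E) : X (X v) = -v := LinearMap.congr_fun hX v
  rw [LinearMap.mem_skewAdjointSubmodule]
  refine ⟨fun h A B ↦ ?_, fun h A B ↦ ?_⟩
  · rw [h A (X B), Pi.neg_apply, hXv, neg_neg]
  · rw [← h, hXv, LinearMap.map_neg₂, Pi.neg_apply, map_neg]

lemma mul_mem_skewAdjointSubmodule (hX : X ∈ P.skewAdjointSubmodule)
    (hY : Y ∈ P.skewAdjointSubmodule) (hXY : X * Y = -(Y * X)) :
    X * Y ∈ P.skewAdjointSubmodule := by
  rw [LinearMap.mem_skewAdjointSubmodule] at *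
  intro A B
  have hXYB : X (Y B) = -Y (X B) := LinearMap.congr_fun hXY B
  rw [Module.End.mul_apply, hX, hY, Pi.neg_apply, Pi.neg_apply, map_neg Y, neg_neg,
    ← neg_eq_iff_eq_neg.2 hXYB]
  rfl

end SkewAdjoint

section GeneralizedClifford

variable {R E : Type*} [CommRing R] [AddCommGroup E] [Module R E]

/-- A generalized Clifford structure: a Clifford family of orthogonal integrable endomorphisms.
As in the paper, integrability refers to the diagonal concomitants `N(I_i, I_i)`; see
`IsGeneralizedClifford.nijenhuis_eq_zero` for the others. -/
structure IsGeneralizedClifford {ι : Type*} (br : E →ₗ[R] E →ₗ[R] E) (P : LinearMap.BilinForm R E)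
    (I : ι → Module.End R E) : Prop extends IsCliffordFamily I where
  isOrthogonal : ∀ i, P.IsOrthogonal (I i)
  nijenhuis_self : ∀ i, nijenhuis br (I i) (I i) = 0

namespace IsGeneralizedClifford

variable {br : E →ₗ[R] E →ₗ[R] E} {P : LinearMap.BilinForm R E}

lemma mem_skewAdjointSubmodule {ι : Type*} {I : ι → Module.End R E}
    (hI : IsGeneralizedClifford br P I) (i : ι) : I i ∈ P.skewAdjointSubmodule :=
  (mem_skewAdjointSubmodule_iff_isOrthogonal (hI.mul_self i)).2 (hI.isOrthogonal i)

lemma isIntegrableComplex {ι : Type*} {I : ι → Module.End R E}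
    (hI : IsGeneralizedClifford br P I) (i : ι) : IsIntegrableComplex br (I i) :=
  ⟨hI.mul_self i, hI.nijenhuis_self i⟩

variable [Invertible (2 : R)]

theorem nijenhuis_eq_zero {ι : Type*} {I : ι → Module.End R E}
    (hI : IsGeneralizedClifford br P I) (i j : ι) : nijenhuis br (I i) (I j) = 0 := by
  obtain rfl | hij := eq_or_ne i j
  · exact hI.nijenhuis_self i
  · exact (hI.isIntegrableComplex i).nijenhuis_eq_zero (hI.isIntegrableComplex j) (hI.anticomm hij)

variable {I : Fin 3 → Module.End R E} (hI : IsGeneralizedClifford br P I)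
include hI

theorem dual : IsGeneralizedClifford br P (cliffordDual I) where
  toIsCliffordFamily := hI.toIsCliffordFamily.dual
  isOrthogonal i := by
    rw [← mem_skewAdjointSubmodule_iff_isOrthogonal (hI.toIsCliffordFamily.dual.mul_self i)]
    exact mul_mem_skewAdjointSubmodule (hI.mem_skewAdjointSubmodule _)
      (hI.mem_skewAdjointSubmodule _) (hI.anticomm_add_one_add_two i)
  nijenhuis_self i :=
    ((hI.isIntegrableComplex _).mul (hI.isIntegrableComplex _)
      (hI.anticomm_add_one_add_two i)).nijenhuis_self

lemma nijenhuis_cliffordDual_self_eq (i j : Fin 3) :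
    nijenhuis br (I i) (cliffordDual I i) = nijenhuis br (I j) (cliffordDual I j) := by
  obtain rfl | hij := eq_or_ne i j
  · rfl
  have hGI (k) : IsIntegrableComplex br (cliffordVolume I * I k) := by
    rw [hI.volume_mul]
    exact hI.dual.isIntegrableComplex k
  rw [← hI.volume_mul, ← hI.volume_mul]
  exact (hI.isIntegrableComplex i).nijenhuis_mul_left_eq (hI.isIntegrableComplex j)
    (hI.anticomm hij) hI.volume_mul_self (hI.commute_volume i) (hI.commute_volume j) (hGI i) (hGI j)

lemma nijenhuis_cliffordDual (i j : Fin 3) :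
    nijenhuis br (I i) (cliffordDual I j) =
      if i = j then nijenhuis br (I 0) (cliffordDual I 0) else 0 := by
  split_ifs with hij
  · rw [hij, hI.nijenhuis_cliffordDual_self_eq j 0]
  · exact (hI.isIntegrableComplex i).nijenhuis_eq_zero (hI.dual.isIntegrableComplex j)
      (hI.mul_cliffordDual_anticomm hij)

end IsGeneralizedClifford

theorem clifford_rotation_is_clifford_general [Invertible (2 : R)] {κ : Type*}
    [DecidableEq κ] {br : E →ₗ[R] E →ₗ[R] E} {P : LinearMap.BilinForm R E}
    {I : Fin 3 → Module.End R E} (hI : IsGeneralizedClifford br P I) {T S : Matrix κ (Fin 3) R}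
    (hT : T * Tᵀ = 1) (hS : S * Sᵀ = 1) :
    IsGeneralizedClifford br P (cliffordRotation I (cliffordDual I) T S) where
  toIsCliffordFamily := hI.toIsCliffordFamily.rotation hT hS
  isOrthogonal i := by
    rw [← mem_skewAdjointSubmodule_iff_isOrthogonal
      ((hI.toIsCliffordFamily.rotation hT hS).mul_self i)]
    exact cliffordRotation_mem hI.mem_skewAdjointSubmodule hI.dual.mem_skewAdjointSubmodule T S i
  nijenhuis_self i := by
    rw [bilin_cliffordRotation (nijenhuis br) (x := 0)
      (fun l m ↦ by rw [hI.nijenhuis_eq_zero, ite_self])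
      (fun l m ↦ by rw [hI.dual.nijenhuis_eq_zero, ite_self]) hI.nijenhuis_cliffordDual
      (fun l m ↦ by
        rw [nijenhuis_comm]
        exact (hI.nijenhuis_cliffordDual m l).trans (if_congr eq_comm rfl rfl))
      hT hS, ite_self]

end GeneralizedClifford

/-- Theorem 1.2 of the paper: the rank-3 Clifford rotation
`K_i = Σ_l (t_{il} I_l^+ + s_{il} I_l^-)` of a rank-3 generalized Clifford
structure is again a rank-3 generalized Clifford structure: the `K_i` satisfy the
Clifford relations, are orthogonal, and all the Nijenhuis concomitants
`N(K_i, K_j)` vanish. -/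
theorem clifford_rotation_is_clifford
    {E : Type*} [AddCommGroup E] [Module ℝ E]
    (br : E →ₗ[ℝ] E →ₗ[ℝ] E)
    (P : E →ₗ[ℝ] E →ₗ[ℝ] ℝ) (hPsymm : ∀ A B : E, P A B = P B A)
    (I : Fin 3 → Module.End ℝ E)
    (hCl : ∀ i j, I i * I j + I j * I i = if i = j then (-2 : Module.End ℝ E) else 0)
    (hOrth : ∀ i, ∀ A B : E, P (I i A) (I i B) = P A B)
    (hInt : ∀ i, ∀ A B : E, Nij br (I i) (I i) A B = 0)
    (J : Fin 3 → Module.End ℝ E)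
    (hJ0 : J 0 = I 1 * I 2) (hJ1 : J 1 = I 2 * I 0) (hJ2 : J 2 = I 0 * I 1)
    (Ip Im : Fin 3 → Module.End ℝ E)
    (hIp : ∀ i, Ip i = (1 / 2 : ℝ) • (J i + I i))
    (hIm : ∀ i, Im i = (1 / 2 : ℝ) • (J i - I i))
    (T S : Matrix (Fin 3) (Fin 3) ℝ)
    (hT : Tᵀ * T = 1) (hTdet : T.det = 1)
    (hS : Sᵀ * S = 1) (hSdet : S.det = 1)
    (K : Fin 3 → Module.End ℝ E)
    (hK : ∀ i, K i = ∑ l, (T i l • Ip l + S i l • Im l)) :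
    -- K_i² = -Id
    (∀ i, K i * K i = -1) ∧
    -- anticommutation for i ≠ j
    (∀ i j, i ≠ j → K i * K j = -(K j * K i)) ∧
    -- the rank-3 Clifford relations
    (∀ i j, K i * K j + K j * K i = if i = j then (-2 : Module.End ℝ E) else 0) ∧
    -- orthogonality
    (∀ i, ∀ A B : E, P (K i A) (K i B) = P A B) ∧
    -- simultaneous integrability
    (∀ i j, ∀ A B : E, Nij br (K i) (K j) A B = 0) := by
  have hI : IsGeneralizedClifford br P I :=
    ⟨(isCliffordFamily_iff ℝ).2 hCl, hOrth, fun i ↦ LinearMap.ext₂ fun A B ↦ by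
      simpa [nij_eq_smul_nijenhuis] using hInt i A B⟩
  have hJ : J = cliffordDual I := by
    ext1 i
    fin_cases i
    exacts [hJ0, hJ1, hJ2]
  have hK' : K = cliffordRotation I (cliffordDual I) T S := by
    ext1 i
    simp only [hK, hIp, hIm, hJ, cliffordRotation, invOf_eq_inv, one_div]
  have hKcl : IsGeneralizedClifford br P K := hK' ▸
    clifford_rotation_is_clifford_general hI (mul_eq_one_comm.1 hT) (mul_eq_one_comm.1 hS)
  refine ⟨hKcl.mul_self, fun i j hij ↦ hKcl.anticomm hij,
    (isCliffordFamily_iff ℝ).1 hKcl.toIsCliffordFamily, hKcl.isOrthogonal, fun i j A B ↦ ?_⟩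
  rw [nij_eq_smul_nijenhuis, hKcl.nijenhuis_eq_zero, LinearMap.zero_apply, LinearMap.zero_apply,
    smul_zero]
end
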